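/- arXiv:2505.09809 — 2 statements merged into one kernel-verified Lean document; each statement's English description precedes it below -/
import Mathlib

section
/- Among the 26 isomorphism classes J_1,...,J_26 of red/blue edge colourings of K_{3,3} (as enumerated in the paper), exactly four contain a colour-alternating 6-cycle as an injectively embedded subgraph: J_4, J_9, J_11, and J_12. The probability t_bip(C_6^A, J_ℓ) that a uniformly random injective homomorphism from C_6 to K_{3,3} is a colour-preserving homomorphism from C_6^A to J_ℓ equals 12/72 for ℓ = 4, 6/72 for ℓ = 9, 6/72 for ℓ = 11, 12/72 for ℓ = 12, and 0 for all other ℓ. -/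
open SimpleGraph Function

/-- An edge-coloured graph: a simple graph together with a symmetric colour function
(`true` = red, `false` = blue). -/
structure ECGraph (V : Type*) where
  graph : SimpleGraph V
  color : V → V → Bool
  color_symm : ∀ u v, color u v = color v u

/-- A colour-preserving homomorphism of edge-coloured graphs. -/
def IsHom {α β : Type*} (H : ECGraph α) (G : ECGraph β) (f : α → β) : Prop :=
  ∀ u v, H.graph.Adj u v → G.graph.Adj (f u) (f v) ∧ G.color (f u) (f v) = H.color u v

/-- Homomorphism density `t(H,G) = hom(H,G)/v(G)^{v(H)}`. -/
noncomputable def homDensity {α β : Type*} [Fintype α] [Fintype β]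
    (H : ECGraph α) (G : ECGraph β) : ℝ :=
  (Nat.card {f : α → β // IsHom H G f} : ℝ) / (Fintype.card β : ℝ) ^ (Fintype.card α)

/-- Injective homomorphism density
`t_inj(H,G) = hom_inj(H,G)·(v(G)-v(H))!/v(G)!`. -/
noncomputable def injDensity {α β : Type*} [Fintype α] [Fintype β]
    (H : ECGraph α) (G : ECGraph β) : ℝ :=
  (Nat.card {f : α → β // Injective f ∧ IsHom H G f} : ℝ) *
    (Nat.factorial (Fintype.card β - Fintype.card α)) / (Nat.factorial (Fintype.card β))

/-- The alternating 6-cycle `C_6^A`: the 6-cycle with edges coloured alternately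
red and blue, so that every vertex is incident to one red and one blue edge. -/
def C6A : ECGraph (Fin 6) where
  graph := cycleGraph 6
  color u v := decide ((v = u + 1 ∧ Even u.val) ∨ (u = v + 1 ∧ Even v.val))
  color_symm u v := by rw [decide_eq_decide]; tauto

abbrev V33 := Fin 3 ⊕ Fin 3

def K33 : SimpleGraph V33 := completeBipartiteGraph (Fin 3) (Fin 3)

/-- Isomorphism of edge-coloured graphs on the vertex set of `K_{3,3}`:
a bijection of the vertices preserving adjacency and edge colours. -/
def ColIso (J J' : ECGraph V33) : Prop :=
  ∃ e : V33 ≃ V33, (∀ u v, J.graph.Adj u v ↔ J'.graph.Adj (e u) (e v)) ∧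
    ∀ u v, J.graph.Adj u v → J'.color (e u) (e v) = J.color u v

/-- The number of colour-preserving automorphisms of an edge-coloured graph `J`. -/
noncomputable def autC (J : ECGraph V33) : ℕ :=
  Nat.card {e : V33 ≃ V33 // (∀ u v, J.graph.Adj u v ↔ J.graph.Adj (e u) (e v)) ∧
    ∀ u v, J.graph.Adj u v → J.color (e u) (e v) = J.color u v}

/-- `d(J, G) = (72/aut(J)) · t_inj(J, G)`. -/
noncomputable def dJ {V : Type*} [Fintype V] (J : ECGraph V33) (G : ECGraph V) : ℝ :=
  (72 / (autC J : ℝ)) * injDensity J G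

/-- `t_bip(H, J)`: the probability that a uniformly random injective graph homomorphism
from the underlying graph of `H` into `K_{3,3}` is a colour-preserving homomorphism
from `H` to `J`. -/
noncomputable def tbip {α : Type*} [Fintype α] (H : ECGraph α) (J : ECGraph V33) : ℝ :=
  (Nat.card {f : α → V33 // Function.Injective f ∧ IsHom H J f} : ℝ) /
    (Nat.card {f : α → V33 // Function.Injective f ∧
      ∀ u v, H.graph.Adj u v → K33.Adj (f u) (f v)} : ℝ)

/-- Build an edge colouring of `K_{3,3}` from a `3 × 3` Boolean matrix
(`m i j` is the colour of the edge between left vertex `i` and right vertex `j`;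
`true` = red, `false` = blue). -/
def mkCol (m : Fin 3 → Fin 3 → Bool) : ECGraph V33 where
  graph := K33
  color u v := match u, v with
    | .inl i, .inr j => m i j
    | .inr j, .inl i => m i j
    | _, _ => false
  color_symm u v := by cases u <;> cases v <;> rfl

/-- `J_4`: the blue edges form a perfect matching. -/
def J4 : ECGraph V33 := mkCol fun i j => decide (i ≠ j)

/-- `J_9` of the paper's Figure 1. -/
def J9 : ECGraph V33 := mkCol fun i j =>
  !decide ((i, j) = (0, 0) ∨ (i, j) = (0, 1) ∨ (i, j) = (1, 0) ∨ (i, j) = (2, 2))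

/-- `J_11` of the paper's Figure 1. -/
def J11 : ECGraph V33 := mkCol fun i j =>
  !decide ((i, j) = (0, 0) ∨ (i, j) = (0, 1) ∨ (i, j) = (1, 0) ∨ (i, j) = (1, 2) ∨
    (i, j) = (2, 1))

/-- `J_12`: the red edges form a perfect matching. -/
def J12 : ECGraph V33 := mkCol fun i j =>
  decide ((i, j) = (0, 2) ∨ (i, j) = (1, 1) ∨ (i, j) = (2, 0))

/-!
An embedding of `C_6` into `K_{3,3}` is the composite of one fixed Hamiltonian cycle with a unique
automorphism of `K_{3,3}`: a connected bipartite graph has only two proper 2-colourings, so an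
embedding either preserves or exchanges the sides. Hence there are `2 · 3! · 3! = 72` embeddings.

The Hamiltonian cycle leaves out three long diagonals, so an alternating 6-cycle in `J` is the same
thing as a set `D` of red diagonals together with an isomorphism onto `J` from the colouring that
extends the alternating one by `D`. Rotating the cycle by two steps permutes the three diagonals
cyclically, so sets `D` of equal size give isomorphic colourings, while the number `3 + |D|` of red
edges is an isomorphism invariant. The four classes are thus given by `|D| = 3, 2, 1, 0`, and a
colouring `J` in the class of `D` admits `(3 choose |D|) · aut(J)` alternating embeddings:
`1 · 12`, `3 · 2`, `3 · 2` and `1 · 12`.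
-/

/-- An isomorphism `e` of edge-coloured graphs, as a predicate on the vertex bijection.
`ColIso J J'` unfolds to the existence of such an `e : V33 ≃ V33`, and `autC J` to the number of
those from `J` to itself. -/
def IsColIso {V W : Type*} (J : ECGraph V) (J' : ECGraph W) (e : V ≃ W) : Prop :=
  (∀ u v, J.graph.Adj u v ↔ J'.graph.Adj (e u) (e v)) ∧
    ∀ u v, J.graph.Adj u v → J'.color (e u) (e v) = J.color u v

section ColourIsomorphisms

variable {U V W : Type*} {J : ECGraph U} {J' : ECGraph V} {J'' : ECGraph W}

theorem IsColIso.symm {e : U ≃ V} (h : IsColIso J J' e) : IsColIso J' J e.symm := by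
  have adj_iff (u v) : J'.graph.Adj u v ↔ J.graph.Adj (e.symm u) (e.symm v) := by
    simp [h.1]
  exact ⟨adj_iff, fun u v huv => by simpa using (h.2 _ _ ((adj_iff u v).1 huv)).symm⟩

theorem IsColIso.trans {e : U ≃ V} {e' : V ≃ W} (h : IsColIso J J' e) (h' : IsColIso J' J'' e') :
    IsColIso J J'' (e.trans e') :=
  ⟨fun u v => (h.1 u v).trans (h'.1 _ _),
    fun u v huv => (h'.2 _ _ ((h.1 u v).1 huv)).trans (h.2 u v huv)⟩

theorem IsColIso.isHom {e : U ≃ V} (h : IsColIso J J' e) : IsHom J J' e :=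
  fun u v huv => ⟨(h.1 u v).1 huv, h.2 u v huv⟩

theorem IsHom.comp {f : U → V} {g : V → W} (hg : IsHom J' J'' g) (hf : IsHom J J' f) :
    IsHom J J'' (g ∘ f) := fun u v huv =>
  have hfuv := hf u v huv
  have hguv := hg _ _ hfuv.1
  ⟨hguv.1, hguv.2.trans hfuv.2⟩

end ColourIsomorphisms

theorem ColIso.refl (J : ECGraph V33) : ColIso J J :=
  ⟨Equiv.refl V33, fun _ _ => Iff.rfl, fun _ _ _ => rfl⟩

theorem ColIso.symm {J J' : ECGraph V33} : ColIso J J' → ColIso J' J :=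
  fun ⟨e, he⟩ => ⟨e.symm, IsColIso.symm he⟩

theorem ColIso.trans {J J' J'' : ECGraph V33} : ColIso J J' → ColIso J' J'' → ColIso J J'' :=
  fun ⟨e, he⟩ ⟨e', he'⟩ => ⟨e.trans e', IsColIso.trans he he'⟩

theorem ColIso.card_isColIso {J J' : ECGraph V33} (h : ColIso J J') :
    Nat.card {e : V33 ≃ V33 // IsColIso J J' e} = autC J' := by
  obtain ⟨e₀, he₀⟩ := h
  refine Nat.card_congr
    ⟨fun e => ⟨e₀.symm.trans e, (IsColIso.symm he₀).trans e.2⟩,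
      fun e => ⟨e₀.trans e, IsColIso.trans he₀ e.2⟩, fun e => ?_, fun e => ?_⟩ <;>
    ext x <;> simp

/-- Twice the number of red edges: each red edge is counted once in each direction. -/
noncomputable def numRedDarts {V : Type*} (J : ECGraph V) : ℕ :=
  Nat.card {p : V × V // J.graph.Adj p.1 p.2 ∧ J.color p.1 p.2 = true}

theorem IsColIso.numRedDarts_eq {V W : Type*} {J : ECGraph V} {J' : ECGraph W} {e : V ≃ W}
    (h : IsColIso J J' e) : numRedDarts J = numRedDarts J' := by
  refine Nat.card_congr ((e.prodCongr e).subtypeEquiv fun p => ?_)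
  simp only [Equiv.prodCongr_apply, Prod.map, ← h.1]
  exact and_congr_right fun hp => by rw [h.2 _ _ hp]

theorem tbip_eq_zero_of_not_exists {α : Type*} [Fintype α] {H : ECGraph α} {J : ECGraph V33}
    (h : ¬∃ f : α → V33, Injective f ∧ IsHom H J f) : tbip H J = 0 := by
  have : IsEmpty {f : α → V33 // Injective f ∧ IsHom H J f} := ⟨fun f => h ⟨f, f.2⟩⟩
  simp [tbip]

theorem exists_equiv_comp_eq {α V : Type*} [Finite V] (c : α ≃ V) {f : α → V} (hf : Injective f) :
    ∃ e : V ≃ V, e ∘ c = f :=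
  ⟨Equiv.ofBijective (f ∘ c.symm) (Finite.injective_iff_bijective.1 (hf.comp c.symm.injective)),
    funext fun u => by simp⟩

theorem exists_injective_and_iff {α V : Type*} [Finite V] (c : α ≃ V) (P : (α → V) → Prop) :
    (∃ f : α → V, Injective f ∧ P f) ↔ ∃ e : V ≃ V, P (e ∘ c) := by
  refine ⟨fun ⟨f, hf, hP⟩ => ?_, fun ⟨e, hP⟩ => ⟨e ∘ c, e.injective.comp c.injective, hP⟩⟩
  obtain ⟨e, rfl⟩ := exists_equiv_comp_eq c hf
  exact ⟨e, hP⟩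

theorem card_injective_and {α V : Type*} [Finite V] (c : α ≃ V) (P : (α → V) → Prop) :
    Nat.card {f : α → V // Injective f ∧ P f} = Nat.card {e : V ≃ V // P (e ∘ c)} := by
  refine (Nat.card_congr (Equiv.ofBijective
    (fun e => ⟨e ∘ c, e.1.injective.comp c.injective, e.2⟩) ⟨?_, ?_⟩)).symm
  · intro e e' h
    have : e.1 ∘ c = e'.1 ∘ c := congrArg Subtype.val h
    exact Subtype.ext (DFunLike.coe_injective (c.surjective.injective_comp_right this))
  · rintro ⟨f, hf, hP⟩
    obtain ⟨e, rfl⟩ := exists_equiv_comp_eq c hf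
    exact ⟨⟨e, hP⟩, rfl⟩

theorem card_exists_eq_mul {ι β : Type*} [Finite ι] [Finite β] {P : ι → β → Prop} {n : ℕ}
    (index_unique : ∀ i j b, P i b → P j b → i = j)
    (card_fiber : ∀ i, (∃ b, P i b) → Nat.card {b // P i b} = n) :
    Nat.card {b // ∃ i, P i b} = Nat.card {i // ∃ b, P i b} * n := by
  have := Fintype.ofFinite {i // ∃ b, P i b}
  calc
    _ = Nat.card (Σ i : {i // ∃ b, P i b}, {b // P i b}) := by
      refine (Nat.card_congr (Equiv.ofBijective (fun p => ⟨p.2, p.1, p.2.2⟩) ⟨?_, ?_⟩)).symm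
      · rintro ⟨⟨i, _⟩, b, hi⟩ ⟨⟨j, _⟩, b', hj⟩ h
        obtain rfl : b = b' := congrArg Subtype.val h
        obtain rfl : i = j := index_unique i j b hi hj
        rfl
      · rintro ⟨b, i, hb⟩
        exact ⟨⟨⟨i, b, hb⟩, b, hb⟩, rfl⟩
    _ = ∑ i : {i // ∃ b, P i b}, Nat.card {b // P i b} := Nat.card_sigma
    _ = Nat.card {i // ∃ b, P i b} * n := by
      simp only [fun i : {i // ∃ b, P i b} => card_fiber i i.2, Finset.sum_const, smul_eq_mul,
        Finset.card_univ, Nat.card_eq_fintype_card]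

theorem exists_forall_coloring_eq_xor {V : Type*} {G : SimpleGraph V} (hG : G.Connected)
    (c c' : G.Coloring Bool) : ∃ b, ∀ v, c' v = (c v ^^ b) := by
  obtain ⟨u⟩ := hG.nonempty
  refine ⟨c u ^^ c' u, fun v => ?_⟩
  obtain ⟨p⟩ := hG.preconnected u v
  have : (c u ↔ c v) ↔ (c' u ↔ c' v) :=
    (c.even_length_iff_congr p).symm.trans (c'.even_length_iff_congr p)
  grind

theorem completeBipartiteGraph_adj_iff {α β : Type*} {x y : α ⊕ β} :
    (completeBipartiteGraph α β).Adj x y ↔ x.isLeft ≠ y.isLeft := by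
  cases x <;> cases y <;> simp

section SidePermutations

variable {α : Type*}

/-- For `t = (b, p, q)`, the automorphism of `K_{α,α}` that applies `p` and `q` to the two sides
and then exchanges the sides if `b` is true. -/
def sidePerm (t : Bool × Equiv.Perm α × Equiv.Perm α) : Equiv.Perm (α ⊕ α) :=
  bif t.1 then (Equiv.sumCongr t.2.1 t.2.2).trans (Equiv.sumComm α α)
  else Equiv.sumCongr t.2.1 t.2.2

theorem isLeft_sidePerm (t : Bool × Equiv.Perm α × Equiv.Perm α) (x : α ⊕ α) :
    (sidePerm t x).isLeft = (x.isLeft ^^ t.1) := by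
  obtain ⟨_ | _, p, q⟩ := t <;> cases x <;> simp [sidePerm]

theorem sidePerm_injective [Nonempty α] : Injective (sidePerm (α := α)) := by
  rintro ⟨b, p, q⟩ ⟨b', p', q'⟩ h
  obtain ⟨a⟩ := ‹Nonempty α›
  obtain rfl : b = b' := by
    simpa [isLeft_sidePerm] using congrArg (fun e => (e (Sum.inl a)).isLeft) h
  have apply_eq (x) := DFunLike.congr_fun h x
  have hp : p = p' := Equiv.ext fun i => by
    cases b <;> simpa [sidePerm] using apply_eq (Sum.inl i)
  have hq : q = q' := Equiv.ext fun i => by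
    cases b <;> simpa [sidePerm] using apply_eq (Sum.inr i)
  rw [hp, hq]

theorem exists_sumCongr_eq_of_isLeft [Finite α] {e : Equiv.Perm (α ⊕ α)}
    (he : ∀ x, (e x).isLeft = x.isLeft) : ∃ p q, Equiv.sumCongr p q = e := by
  have mapsTo : Set.MapsTo e (Set.range Sum.inl) (Set.range Sum.inl) := by
    rintro _ ⟨i, rfl⟩
    obtain ⟨j, hj⟩ := Sum.isLeft_iff.1 (he (Sum.inl i))
    exact ⟨j, hj.symm⟩
  obtain ⟨⟨p, q⟩, hpq⟩ := Equiv.Perm.mem_sumCongrHom_range_of_perm_mapsTo_inl mapsTo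
  exact ⟨p, q, hpq⟩

theorem exists_sidePerm_eq_of_isLeft [Finite α] {e : Equiv.Perm (α ⊕ α)} {b : Bool}
    (he : ∀ x, (e x).isLeft = (x.isLeft ^^ b)) : ∃ t, sidePerm t = e := by
  cases b
  · obtain ⟨p, q, hpq⟩ := exists_sumCongr_eq_of_isLeft (e := e) (by simpa using he)
    exact ⟨(false, p, q), hpq⟩
  · obtain ⟨p, q, hpq⟩ := exists_sumCongr_eq_of_isLeft (e := e.trans (Equiv.sumComm α α))
      (fun x => by simp [← Sum.bnot_isLeft, he])
    refine ⟨(true, p, q), Equiv.ext fun x => ?_⟩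
    simp [sidePerm, hpq]

end SidePermutations

theorem K33_adj_iff {x y : V33} : K33.Adj x y ↔ x.isLeft ≠ y.isLeft :=
  completeBipartiteGraph_adj_iff

instance : DecidableRel K33.Adj := fun _ _ => decidable_of_iff' _ K33_adj_iff

instance : DecidableRel C6A.graph.Adj := inferInstanceAs (DecidableRel (cycleGraph 6).Adj)

/-- The Hamiltonian cycle of `K_{3,3}` whose `2i`-th vertex is `inl i` and whose `(2i+1)`-st
vertex is `inr i`; it identifies the vertices of `C_6` with those of `K_{3,3}`. -/
def hexagon : Fin 6 ≃ V33 where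
  toFun := ![.inl 0, .inr 0, .inl 1, .inr 1, .inl 2, .inr 2]
  invFun := Sum.elim ![0, 2, 4] ![1, 3, 5]
  left_inv := by decide
  right_inv := by decide

theorem adj_hexagon {u v : Fin 6} (h : C6A.graph.Adj u v) :
    K33.Adj (hexagon u) (hexagon v) := by
  revert u v
  decide

theorem exists_isLeft_eq_xor_of_adj_hexagon {e : V33 ≃ V33}
    (he : ∀ u v, C6A.graph.Adj u v → K33.Adj (e (hexagon u)) (e (hexagon v))) :
    ∃ b, ∀ x, (e x).isLeft = (x.isLeft ^^ b) := by
  let c : C6A.graph.Coloring Bool :=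
    Coloring.mk (fun u => (hexagon u).isLeft) fun h => K33_adj_iff.1 (adj_hexagon h)
  let c' : C6A.graph.Coloring Bool :=
    Coloring.mk (fun u => (e (hexagon u)).isLeft) fun h => K33_adj_iff.1 (he _ _ h)
  obtain ⟨b, hb⟩ := exists_forall_coloring_eq_xor (G := C6A.graph) cycleGraph_connected c c'
  exact ⟨b, hexagon.surjective.forall.2 hb⟩

theorem forall_adj_hexagon_iff {e : V33 ≃ V33} :
    (∀ u v, C6A.graph.Adj u v → K33.Adj (e (hexagon u)) (e (hexagon v))) ↔
      ∀ x y, K33.Adj x y ↔ K33.Adj (e x) (e y) := by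
  refine ⟨fun h x y => ?_, fun h u v huv => (h _ _).1 (adj_hexagon huv)⟩
  obtain ⟨b, hb⟩ := exists_isLeft_eq_xor_of_adj_hexagon h
  simp [K33_adj_iff, hb]

theorem forall_K33_adj_iff_iff_exists_sidePerm {e : V33 ≃ V33} :
    (∀ x y, K33.Adj x y ↔ K33.Adj (e x) (e y)) ↔ ∃ t, sidePerm t = e := by
  constructor
  · intro h
    obtain ⟨b, hb⟩ := exists_isLeft_eq_xor_of_adj_hexagon (forall_adj_hexagon_iff.2 h)
    exact exists_sidePerm_eq_of_isLeft hb
  · rintro ⟨t, rfl⟩ x y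
    simp [K33_adj_iff, isLeft_sidePerm]

theorem card_K33_automorphisms_and (P : (V33 ≃ V33) → Prop) :
    Nat.card {e : V33 ≃ V33 // (∀ x y, K33.Adj x y ↔ K33.Adj (e x) (e y)) ∧ P e} =
      Nat.card {t : Bool × Equiv.Perm (Fin 3) × Equiv.Perm (Fin 3) // P (sidePerm t)} := by
  refine (Nat.card_congr (Equiv.ofBijective
    (fun t => ⟨sidePerm t, forall_K33_adj_iff_iff_exists_sidePerm.2 ⟨t, rfl⟩, t.2⟩) ⟨?_, ?_⟩)).symm
  · exact fun s t h => Subtype.ext (sidePerm_injective (congrArg Subtype.val h))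
  · rintro ⟨e, he, hP⟩
    obtain ⟨t, rfl⟩ := forall_K33_adj_iff_iff_exists_sidePerm.1 he
    exact ⟨⟨t, hP⟩, rfl⟩

theorem card_embeddings_C6_K33 :
    Nat.card {f : Fin 6 → V33 // Injective f ∧
      ∀ u v, C6A.graph.Adj u v → K33.Adj (f u) (f v)} = 72 := by
  rw [card_injective_and hexagon]
  have := card_K33_automorphisms_and fun _ => True
  simp only [and_true] at this
  simp only [comp_apply, forall_adj_hexagon_iff, this]
  simp [Fintype.card_perm, Nat.factorial]

/-- The colour matrix of the colouring of `K_{3,3}` that extends the alternating colouring of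
`hexagon`, the long diagonal from `inl i` to `inr (i + 1)` being red exactly when `i ∈ D`. -/
def hexCol (D : Finset (Fin 3)) (i j : Fin 3) : Bool :=
  decide (j = i ∨ j = i + 1 ∧ i ∈ D)

theorem isHom_hexagon (D : Finset (Fin 3)) : IsHom C6A (mkCol (hexCol D)) hexagon := by
  have color_hexagon : ∀ D : Finset (Fin 3), ∀ u v, C6A.graph.Adj u v →
      (mkCol (hexCol D)).color (hexagon u) (hexagon v) = C6A.color u v := by decide
  exact fun u v huv => ⟨adj_hexagon huv, color_hexagon D u v huv⟩

theorem isColIso_mkCol_iff {m : Fin 3 → Fin 3 → Bool} {J : ECGraph V33} (hJ : J.graph = K33)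
    {e : V33 ≃ V33} : IsColIso (mkCol m) J e ↔
      (∀ x y, K33.Adj x y ↔ K33.Adj (e x) (e y)) ∧
        ∀ i j, J.color (e (.inl i)) (e (.inr j)) = m i j := by
  rw [IsColIso, hJ]
  refine and_congr_right fun _ => ⟨fun h i j => h _ _ (by simp [mkCol, K33]), fun h => ?_⟩
  rintro (i | i) (j | j) hij
  · simp [mkCol, K33] at hij
  · exact h i j
  · exact (J.color_symm _ _).trans (h j i)
  · simp [mkCol, K33] at hij

theorem color_eq_hexCol {J : ECGraph V33} {e : V33 ≃ V33} (he : IsHom C6A J (e ∘ hexagon))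
    (i j : Fin 3) : J.color (e (.inl i)) (e (.inr j)) =
      hexCol {i | J.color (e (.inl i)) (e (.inr (i + 1))) = true} i j := by
  have color_eq (x y : V33) (h : C6A.graph.Adj (hexagon.symm x) (hexagon.symm y)) :
      J.color (e x) (e y) = C6A.color (hexagon.symm x) (hexagon.symm y) := by
    simpa using (he _ _ h).2
  have red (i : Fin 3) : J.color (e (.inl i)) (e (.inr i)) = true := by
    rw [color_eq] <;> revert i <;> decide
  have blue (j : Fin 3) : J.color (e (.inl (j + 1))) (e (.inr j)) = false := by
    rw [color_eq] <;> revert j <;> decide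
  have cases_ij : ∀ i j : Fin 3, j = i ∨ j = i + 1 ∨ i = j + 1 := by decide
  rcases cases_ij i j with rfl | rfl | rfl
  · simp [hexCol, red]
  · simp [hexCol]
  · have ne_add_two : ∀ j : Fin 3, j ≠ j + 1 + 1 := by decide
    simp [hexCol, blue, ne_add_two]

theorem isHom_comp_hexagon_iff {J : ECGraph V33} (hJ : J.graph = K33) {e : V33 ≃ V33} :
    IsHom C6A J (e ∘ hexagon) ↔ ∃ D, IsColIso (mkCol (hexCol D)) J e := by
  refine ⟨fun he => ⟨_, (isColIso_mkCol_iff hJ).2 ⟨?_, color_eq_hexCol he⟩⟩,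
    fun ⟨D, hD⟩ => hD.isHom.comp (isHom_hexagon D)⟩
  exact forall_adj_hexagon_iff.1 fun u v huv => hJ ▸ (he u v huv).1

theorem hexCol_injective : Injective hexCol := by
  intro D D' h
  ext i
  simpa [hexCol] using congrFun₂ h i (i + 1)

theorem card_alternating_embeddings {J : ECGraph V33} (hJ : J.graph = K33) :
    Nat.card {f : Fin 6 → V33 // Injective f ∧ IsHom C6A J f} =
      Nat.card {D // ColIso (mkCol (hexCol D)) J} * autC J := by
  rw [card_injective_and hexagon]
  simp only [isHom_comp_hexagon_iff hJ]
  refine card_exists_eq_mul (fun D D' e h h' => hexCol_injective (funext₂ fun i j => ?_))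
    fun D h => ColIso.card_isColIso h
  exact (((isColIso_mkCol_iff hJ).1 h).2 i j).symm.trans (((isColIso_mkCol_iff hJ).1 h').2 i j)

theorem exists_alternating_embedding_iff {J : ECGraph V33} (hJ : J.graph = K33) :
    (∃ f : Fin 6 → V33, Injective f ∧ IsHom C6A J f) ↔ ∃ D, ColIso (mkCol (hexCol D)) J := by
  rw [exists_injective_and_iff hexagon]
  simp only [isHom_comp_hexagon_iff hJ]
  exact exists_comm

theorem colIso_mkCol_of_perm {m m' : Fin 3 → Fin 3 → Bool} (p q : Equiv.Perm (Fin 3))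
    (h : ∀ i j, m' (p i) (q j) = m i j) : ColIso (mkCol m) (mkCol m') := by
  refine ⟨Equiv.sumCongr p q, (isColIso_mkCol_iff rfl).2 ⟨fun x y => ?_, h⟩⟩
  simp [K33_adj_iff]

theorem numRedDarts_hexCol (D : Finset (Fin 3)) :
    numRedDarts (mkCol (hexCol D)) = 2 * (3 + D.card) := by
  have card_red : ∀ D : Finset (Fin 3), Fintype.card
      {p : V33 × V33 // K33.Adj p.1 p.2 ∧ (mkCol (hexCol D)).color p.1 p.2 = true} =
        2 * (3 + D.card) := by
    decide +kernel
  exact Nat.card_eq_fintype_card (α := {p : V33 × V33 // K33.Adj p.1 p.2 ∧ _}) |>.trans (card_red D)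

theorem colIso_hexCol_iff {D D' : Finset (Fin 3)} :
    ColIso (mkCol (hexCol D)) (mkCol (hexCol D')) ↔ D.card = D'.card := by
  constructor
  · rintro ⟨e, he⟩
    have := IsColIso.numRedDarts_eq he
    rw [numRedDarts_hexCol, numRedDarts_hexCol] at this
    lia
  · intro h
    obtain ⟨k, hk⟩ : ∃ k, ∀ i, i + k ∈ D' ↔ i ∈ D := by
      revert D D'
      decide
    refine colIso_mkCol_of_perm (Equiv.addRight k) (Equiv.addRight k) fun i j => ?_
    simp [hexCol, hk, add_right_comm _ k]

theorem colIso_iff_card_eq {D D' : Finset (Fin 3)} {J J' : ECGraph V33}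
    (h : ColIso (mkCol (hexCol D)) J) (h' : ColIso (mkCol (hexCol D')) J') :
    ColIso J J' ↔ D.card = D'.card := by
  rw [← colIso_hexCol_iff]
  exact ⟨fun hJ => (h.trans hJ).trans h'.symm, fun hD => (h.symm.trans hD).trans h'⟩

theorem tbip_C6A_of_colIso {J : ECGraph V33} (hJ : J.graph = K33) {D : Finset (Fin 3)}
    (h : ColIso (mkCol (hexCol D)) J) :
    tbip C6A J = Nat.choose 3 D.card * autC J / 72 := by
  have iso_iff (D') := colIso_iff_card_eq (ColIso.refl (mkCol (hexCol D'))) h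
  have card_colIso : Nat.card {D' // ColIso (mkCol (hexCol D')) J} = Nat.choose 3 D.card := by
    simp [iso_iff, Nat.card_eq_fintype_card, Fintype.card_finset_len]
  rw [tbip, card_alternating_embeddings hJ, card_embeddings_C6_K33, card_colIso,
    Nat.cast_mul, Nat.cast_ofNat]

theorem colIso_J4 : ColIso (mkCol (hexCol .univ)) J4 :=
  colIso_mkCol_of_perm (Equiv.addRight 2) 1 (by decide)

theorem colIso_J9 : ColIso (mkCol (hexCol {0, 1})) J9 :=
  colIso_mkCol_of_perm (Equiv.swap 0 2) 1 (by decide)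

theorem colIso_J11 : ColIso (mkCol (hexCol {0})) J11 :=
  colIso_mkCol_of_perm (Equiv.addRight 2) (Equiv.swap 1 2) (by decide)

theorem colIso_J12 : ColIso (mkCol (hexCol ∅)) J12 :=
  colIso_mkCol_of_perm 1 Fin.revPerm (by decide)

theorem exists_colIso_hexCol_iff (J : ECGraph V33) :
    (∃ D, ColIso (mkCol (hexCol D)) J) ↔
      ColIso J4 J ∨ ColIso J9 J ∨ ColIso J11 J ∨ ColIso J12 J := by
  constructor
  · rintro ⟨D, hD⟩
    rw [colIso_iff_card_eq colIso_J4 hD, colIso_iff_card_eq colIso_J9 hD,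
      colIso_iff_card_eq colIso_J11 hD, colIso_iff_card_eq colIso_J12 hD]
    clear hD
    revert D
    decide
  · rintro (h | h | h | h)
    exacts [⟨_, colIso_J4.trans h⟩, ⟨_, colIso_J9.trans h⟩, ⟨_, colIso_J11.trans h⟩,
      ⟨_, colIso_J12.trans h⟩]

theorem autC_mkCol (m : Fin 3 → Fin 3 → Bool) :
    autC (mkCol m) = Fintype.card {t : Bool × Equiv.Perm (Fin 3) × Equiv.Perm (Fin 3) //
      ∀ i j, (mkCol m).color (sidePerm t (.inl i)) (sidePerm t (.inr j)) = m i j} := by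
  have isColIso_iff (e) := isColIso_mkCol_iff (m := m) (J := mkCol m) (e := e) rfl
  rw [← Nat.card_eq_fintype_card, ← card_K33_automorphisms_and
    fun e => ∀ i j, (mkCol m).color (e (.inl i)) (e (.inr j)) = m i j]
  simp only [← isColIso_iff]
  rfl

theorem autC_J4 : autC J4 = 12 := (autC_mkCol _).trans (by decide +kernel)

theorem autC_J9 : autC J9 = 2 := (autC_mkCol _).trans (by decide +kernel)

theorem autC_J11 : autC J11 = 2 := (autC_mkCol _).trans (by decide +kernel)

theorem autC_J12 : autC J12 = 12 := (autC_mkCol _).trans (by decide +kernel)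

/-- `J_4`, `J_9`, `J_11`, `J_12` are pairwise non-isomorphic;
`t_bip(C_6^A, J_ℓ)` equals `12/72`, `6/72`, `6/72`, `12/72` for `ℓ = 4, 9, 11, 12`
respectively; and a colouring of `K_{3,3}` contains an injectively embedded alternating
6-cycle iff it is isomorphic to one of these four, so `t_bip(C_6^A, ·)` vanishes at
every colouring not isomorphic to one of them. -/
theorem tbip_C6A_values :
    (¬ColIso J4 J9 ∧ ¬ColIso J4 J11 ∧ ¬ColIso J4 J12 ∧ ¬ColIso J9 J11 ∧
      ¬ColIso J9 J12 ∧ ¬ColIso J11 J12) ∧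
    tbip C6A J4 = 12 / 72 ∧ tbip C6A J9 = 6 / 72 ∧ tbip C6A J11 = 6 / 72 ∧
    tbip C6A J12 = 12 / 72 ∧
    ∀ J' : ECGraph V33, J'.graph = K33 →
      ((∃ f : Fin 6 → V33, Function.Injective f ∧ IsHom C6A J' f) ↔
        (ColIso J4 J' ∨ ColIso J9 J' ∨ ColIso J11 J' ∨ ColIso J12 J')) ∧
      ((¬ColIso J4 J' ∧ ¬ColIso J9 J' ∧ ¬ColIso J11 J' ∧ ¬ColIso J12 J') →
        tbip C6A J' = 0) := by
  have exists_iff (J' : ECGraph V33) (hJ' : J'.graph = K33) :=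
    (exists_alternating_embedding_iff hJ').trans (exists_colIso_hexCol_iff J')
  refine ⟨⟨mt (colIso_iff_card_eq colIso_J4 colIso_J9).1 (by decide),
      mt (colIso_iff_card_eq colIso_J4 colIso_J11).1 (by decide),
      mt (colIso_iff_card_eq colIso_J4 colIso_J12).1 (by decide),
      mt (colIso_iff_card_eq colIso_J9 colIso_J11).1 (by decide),
      mt (colIso_iff_card_eq colIso_J9 colIso_J12).1 (by decide),
      mt (colIso_iff_card_eq colIso_J11 colIso_J12).1 (by decide)⟩,
    ?_, ?_, ?_, ?_, fun J' hJ' => ⟨exists_iff J' hJ', fun hJ'_ne => tbip_eq_zero_of_not_exists ?_⟩⟩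
  · norm_num [tbip_C6A_of_colIso rfl colIso_J4, autC_J4]
  · norm_num [tbip_C6A_of_colIso rfl colIso_J9, autC_J9]
  · norm_num [tbip_C6A_of_colIso rfl colIso_J11, autC_J11]
  · norm_num [tbip_C6A_of_colIso rfl colIso_J12, autC_J12]
  · simpa only [exists_iff J' hJ', not_or] using hJ'_ne
end

section
/- Every edge-coloured graph G on n vertices satisfies t_inj(C_6^A, G) ≤ (1/2)^6 + O(1/n), where the implicit constant is absolute. -/
open SimpleGraph Function

/-
Write `J` for the all-ones matrix, `A` for the red adjacency matrix and `n` for the number of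
vertices. Each homomorphism of the alternating 6-cycle contributes `1` to `tr ((A (J - A)) ^ 3)`,
so it suffices to bound this trace by `n ^ 6 / 64`. The symmetric matrix `S = 2 A - J` has entries
at most `1` in absolute value, and `64 tr ((A (J - A)) ^ 3) = tr (((J + S) (J - S)) ^ 3)` is
`n ^ 6` plus a polynomial in the walk sums `1ᵀ S ^ k 1` minus `tr (S ^ 6)`. The terms other than
`n ^ 6` have a nonpositive sum, by a combination of three inequalities: the squared norm of
`S ^ 3 - y 1ᵀ - 1 yᵀ` is nonnegative, and `2 a b ≤ a ^ 2 + b ^ 2` bounds the pairing of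
`x 1ᵀ ± 1 xᵀ` with the entrywise product of `S` and `y 1ᵀ ± 1 yᵀ`, where `x` and `y` are
combinations of the vectors `S ^ k 1`. Passing to injective maps costs only `O(1 / n)`, because
all but `O(n ^ 5)` of the maps from the six vertices of the cycle are injective.
-/

section

open Matrix

variable {V R : Type*} [Fintype V] [DecidableEq V] [CommSemiring R] {S : Matrix V V R}

/-- The vector whose `i`-th entry is the total `S`-weight of the walks with `k` steps starting at
`i`, the weight of a walk being the product of the entries of `S` along its steps. -/
def walkVec (S : Matrix V V R) (k : ℕ) : V → R := S ^ k *ᵥ 1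

/-- The total `S`-weight of all walks with `k` steps, that is `1ᵀ S ^ k 1`; it is `Fintype.card V`
for `k = 0`. -/
def walkSum (S : Matrix V V R) (k : ℕ) : R := ∑ i, walkVec S k i

lemma pow_mulVec_walkVec (k l : ℕ) : S ^ k *ᵥ walkVec S l = walkVec S (k + l) := by
  rw [walkVec, mulVec_mulVec, ← pow_add, walkVec]

lemma walkVec_vecMul_pow (hS : S.IsSymm) (k l : ℕ) :
    walkVec S k ᵥ* S ^ l = walkVec S (k + l) := by
  rw [← mulVec_transpose, (hS.pow l).eq, pow_mulVec_walkVec, add_comm]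

lemma walkVec_zero : walkVec S 0 = 1 := by
  rw [walkVec, pow_zero, one_mulVec]

lemma walkSum_zero : walkSum S 0 = Fintype.card V := by
  simp [walkSum, walkVec_zero]

lemma walkVec_dotProduct_walkVec (hS : S.IsSymm) (k l : ℕ) :
    walkVec S k ⬝ᵥ walkVec S l = walkSum S (k + l) := by
  rw [← Nat.zero_add k, ← walkVec_vecMul_pow hS, ← dotProduct_mulVec, pow_mulVec_walkVec,
    walkVec_zero, one_dotProduct, walkSum, Nat.zero_add]

end

section

open Matrix

variable {V R : Type*} [Fintype V] [DecidableEq V] [CommRing R] {S : Matrix V V R}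

lemma trace_sub_pow_three (A B : Matrix V V R) :
    trace ((A - B) ^ 3) =
      trace (A ^ 3) - 3 * trace (A ^ 2 * B) + 3 * trace (A * B ^ 2) - trace (B ^ 3) := by
  have expand : (A - B) ^ 3 = A ^ 3 - (A ^ 2 * B + A * B * A + B * A ^ 2)
      + (A * B ^ 2 + B * A * B + B ^ 2 * A) - B ^ 3 := by noncomm_ring
  rw [expand]
  simp only [trace_add, trace_sub]
  rw [trace_mul_cycle A B A, trace_mul_comm B (A ^ 2), trace_mul_cycle B A B,
    trace_mul_comm (B ^ 2) A, ← sq, ← sq, trace_mul_comm (B ^ 2) A]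
  ring

lemma ones_add_mul_ones_sub (hS : S.IsSymm) :
    (vecMulVec 1 1 + S) * (vecMulVec 1 1 - S) =
      walkSum S 0 • vecMulVec (walkVec S 0) (walkVec S 0)
        + vecMulVec (walkVec S 1) (walkVec S 0)
        - vecMulVec (walkVec S 0) (walkVec S 1) - S ^ 2 := by
  have left : S * vecMulVec 1 1 = vecMulVec (walkVec S 1) (walkVec S 0) := by
    rw [mul_vecMulVec, walkVec, walkVec, pow_one, pow_zero, one_mulVec]
  have right : vecMulVec 1 1 * S = vecMulVec (walkVec S 0) (walkVec S 1) := by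
    rw [vecMulVec_mul, ← mulVec_transpose, hS.eq, walkVec, walkVec, pow_one, pow_zero, one_mulVec]
  rw [add_mul, mul_sub, mul_sub, left, right, vecMulVec_mul_vecMulVec, one_dotProduct_one,
    walkSum_zero, walkVec_zero, vecMulVec_smul, sq]
  abel

theorem trace_ones_add_mul_ones_sub_pow_three (hS : S.IsSymm) :
    trace (((vecMulVec 1 1 + S) * (vecMulVec 1 1 - S)) ^ 3) =
      walkSum S 0 ^ 6 - 6 * walkSum S 0 ^ 3 * walkSum S 2 + 3 * walkSum S 0 ^ 2 * walkSum S 1 ^ 2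
        + 6 * walkSum S 0 * walkSum S 4 - 6 * walkSum S 1 * walkSum S 3 + 3 * walkSum S 2 ^ 2
        - trace (S ^ 6) := by
  rw [ones_add_mul_ones_sub hS, trace_sub_pow_three, ← pow_mul, ← pow_mul]
  simp only [pow_succ _ 2, sq (_ - vecMulVec _ _), add_mul, sub_mul, mul_add, mul_sub,
    smul_mul_assoc, mul_smul_comm, vecMulVec_mul, vecMul_vecMulVec, vecMulVec_smul,
    walkVec_vecMul_pow hS, walkVec_dotProduct_walkVec hS, trace_add, trace_sub, trace_smul,
    trace_vecMulVec, smul_eq_mul]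
  ring_nf

end

section

open Matrix

variable {V R K : Type*} [Fintype V] [CommRing R] [Field K] [LinearOrder K] [IsStrictOrderedRing K]

-- The signs `ε = 1` and `ε = -1` treat the symmetric matrix `x 1ᵀ + 1 xᵀ` and the antisymmetric
-- matrix `x 1ᵀ - 1 xᵀ` together.
lemma sum_sum_add_mul_sq {ε : R} (hε : ε ^ 2 = 1) (x : V → R) :
    ∑ i, ∑ j, (x i + ε * x j) ^ 2 =
      2 * (Fintype.card V * (x ⬝ᵥ x) + ε * (1 ⬝ᵥ x) ^ 2) := by
  have expand (i j : V) : (x i + ε * x j) ^ 2 =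
      x i * x i + x j * x j + 2 * ε * (x i * x j) := by linear_combination x j ^ 2 * hε
  simp only [expand, Finset.sum_add_distrib, Finset.sum_const, Finset.card_univ, nsmul_eq_mul,
    ← Finset.mul_sum, ← Finset.sum_mul, one_dotProduct]
  simp only [dotProduct]
  ring

lemma sum_sum_mul_add_mul_mul {S : Matrix V V R} (hS : S.IsSymm)
    {ε : R} (hε : ε ^ 2 = 1) (x y : V → R) :
    ∑ i, ∑ j, S i j * ((x i + ε * x j) * (y i + ε * y j)) =
      2 * ((S *ᵥ 1 * x) ⬝ᵥ y + ε * (x ⬝ᵥ S *ᵥ y)) := by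
  have expand (i j : V) : S i j * ((x i + ε * x j) * (y i + ε * y j)) =
      S i j * x i * y i + S j i * x j * y j
        + ε * (x i * (S i j * y j)) + ε * (x j * (S j i * y i)) := by
    rw [hS.apply i j]
    linear_combination S i j * x j * y j * hε
  have diagonal : ∑ i, ∑ j, S i j * x i * y i = (S *ᵥ 1 * x) ⬝ᵥ y := by
    simp only [dotProduct, mulVec, Pi.mul_apply, Pi.one_apply, mul_one, Finset.sum_mul]
  have mixed : ∑ i, ∑ j, ε * (x i * (S i j * y j)) = ε * (x ⬝ᵥ S *ᵥ y) := by
    simp only [dotProduct, mulVec, Finset.mul_sum]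
  simp only [expand, Finset.sum_add_distrib]
  rw [Finset.sum_comm (f := fun i j ↦ S j i * x j * y j),
    Finset.sum_comm (f := fun i j ↦ ε * (x j * (S j i * y i))), diagonal, mixed]
  ring

lemma two_mul_dotProduct_add_le {S : Matrix V V K} (hS : S.IsSymm) (hS_le : ∀ i j, S i j ^ 2 ≤ 1)
    {ε : K} (hε : ε ^ 2 = 1) (x y : V → K) :
    2 * ((S *ᵥ 1 * x) ⬝ᵥ y + ε * (x ⬝ᵥ S *ᵥ y)) ≤
      Fintype.card V * (x ⬝ᵥ x + y ⬝ᵥ y) + ε * ((1 ⬝ᵥ x) ^ 2 + (1 ⬝ᵥ y) ^ 2) := by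
  have pointwise (i j : V) : 2 * (S i j * ((x i + ε * x j) * (y i + ε * y j))) ≤
      (x i + ε * x j) ^ 2 + (y i + ε * y j) ^ 2 := by
    linarith [sq_nonneg (x i + ε * x j - S i j * (y i + ε * y j)),
      mul_le_mul_of_nonneg_right (hS_le i j) (sq_nonneg (y i + ε * y j))]
  have total := Finset.sum_le_sum fun i (_ : i ∈ Finset.univ) ↦
    Finset.sum_le_sum fun j (_ : j ∈ Finset.univ) ↦ pointwise i j
  simp only [← Finset.mul_sum, Finset.sum_add_distrib] at total
  rw [sum_sum_mul_add_mul_mul hS hε, sum_sum_add_mul_sq hε, sum_sum_add_mul_sq hε] at total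
  linarith

variable [DecidableEq V]

lemma four_mul_dotProduct_mulVec_one_le {M : Matrix V V K} (hM : M.IsSymm) (y : V → K) :
    4 * (y ⬝ᵥ M *ᵥ 1) ≤
      trace (M ^ 2) + 2 * (Fintype.card V * (y ⬝ᵥ y) + (1 ⬝ᵥ y) ^ 2) := by
  have nonneg : 0 ≤ ∑ i, ∑ j, (M i j - (y i + 1 * y j)) ^ 2 := by positivity
  have expand (i j : V) : (M i j - (y i + 1 * y j)) ^ 2 =
      M i j * M j i - 2 * (y i * M i j) - 2 * (y j * M j i) + (y i + 1 * y j) ^ 2 := by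
    rw [hM.apply i j]
    ring
  have frobenius : ∑ i, ∑ j, M i j * M j i = trace (M ^ 2) := by
    simp only [sq, trace, Matrix.diag_apply, mul_apply]
  have cross : ∑ i, ∑ j, 2 * (y i * M i j) = 2 * (y ⬝ᵥ M *ᵥ 1) := by
    simp only [dotProduct, mulVec, Pi.one_apply, mul_one, Finset.mul_sum]
  simp only [expand, Finset.sum_add_distrib, Finset.sum_sub_distrib] at nonneg
  rw [Finset.sum_comm (f := fun i j ↦ 2 * (y j * M j i)), frobenius, cross,
    sum_sum_add_mul_sq (one_pow 2)] at nonneg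
  linarith

lemma walkSum_add_self_nonneg {S : Matrix V V K} (hS : S.IsSymm) (k : ℕ) :
    0 ≤ walkSum S (k + k) := by
  rw [← walkVec_dotProduct_walkVec hS]
  exact Finset.sum_nonneg fun i _ ↦ mul_self_nonneg _

lemma walkSum_add_trace_pow_six_nonneg {S : Matrix V V K} (hS : S.IsSymm)
    (hS_le : ∀ i j, S i j ^ 2 ≤ 1) :
    0 ≤ 6 * walkSum S 0 ^ 3 * walkSum S 2 - 3 * walkSum S 0 ^ 2 * walkSum S 1 ^ 2
        - 6 * walkSum S 0 * walkSum S 4 + 6 * walkSum S 1 * walkSum S 3 - 3 * walkSum S 2 ^ 2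
        + trace (S ^ 6) := by
  -- The multipliers below are chosen so that `∑ i, walkVec S 1 i ^ 2 * walkVec S 2 i`, which is not
  -- a walk sum, cancels between the first two inequalities.
  have symmetric := two_mul_dotProduct_add_le hS hS_le (one_pow 2) (walkVec S 2)
    (walkSum S 0 • walkVec S 1 - (walkSum S 1 / 4) • walkVec S 0)
  have antisymmetric := two_mul_dotProduct_add_le hS hS_le (neg_one_pow_two (R := K)) (walkVec S 2)
    (-(2 / 5 * walkSum S 0) • walkVec S 1)
  have cubic := four_mul_dotProduct_mulVec_one_le (hS.pow 3)
    ((5 / 4 * walkSum S 0) • walkVec S 1 - walkSum S 1 • walkVec S 0)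
  have mulVec_walkVec (k : ℕ) : S *ᵥ walkVec S k = walkVec S (1 + k) := by
    rw [← pow_mulVec_walkVec, pow_one]
  have mul_dotProduct_walkVec_zero : (walkVec S 1 * walkVec S 2) ⬝ᵥ walkVec S 0 = walkSum S 3 := by
    rw [walkVec_zero, ← walkVec_dotProduct_walkVec hS 1 2, dotProduct_one]
    rfl
  simp only [← walkSum_zero (S := S), ← walkVec_zero (S := S), mulVec_walkVec, pow_mulVec_walkVec,
    mulVec_sub, mulVec_smul, dotProduct_sub, sub_dotProduct, dotProduct_smul, smul_dotProduct,
    walkVec_dotProduct_walkVec hS, mul_dotProduct_walkVec_zero, smul_eq_mul,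
    ← pow_mul, Nat.reduceAdd, Nat.reduceMul] at symmetric antisymmetric cubic
  have walkSum_two_nonneg : 0 ≤ walkSum S 0 ^ 3 * walkSum S 2 :=
    mul_nonneg (pow_nonneg (walkSum_add_self_nonneg hS 0) 3) (walkSum_add_self_nonneg hS 1)
  have walkSum_one_sq_nonneg : 0 ≤ walkSum S 0 ^ 2 * walkSum S 1 ^ 2 := by positivity
  linear_combination 2 * symmetric + 5 * antisymmetric + cubic + 3 / 40 * walkSum_two_nonneg
    + 17 / 40 * walkSum_one_sq_nonneg

theorem trace_ones_add_mul_ones_sub_pow_three_le {S : Matrix V V K} (hS : S.IsSymm)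
    (hS_le : ∀ i j, S i j ^ 2 ≤ 1) :
    trace (((vecMulVec 1 1 + S) * (vecMulVec 1 1 - S)) ^ 3) ≤ (Fintype.card V : K) ^ 6 := by
  rw [trace_ones_add_mul_ones_sub_pow_three hS, walkSum_zero]
  have remainder_nonneg := walkSum_add_trace_pow_six_nonneg hS hS_le
  rw [walkSum_zero] at remainder_nonneg
  linarith

theorem trace_mul_ones_sub_pow_three_le {A : Matrix V V K} (hA : A.IsSymm)
    (hA_nonneg : ∀ i j, 0 ≤ A i j) (hA_le_one : ∀ i j, A i j ≤ 1) :
    trace ((A * (vecMulVec 1 1 - A)) ^ 3) ≤ (1 / 2) ^ 6 * (Fintype.card V : K) ^ 6 := by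
  let S : Matrix V V K := (2 : K) • A - vecMulVec 1 1
  have hS : S.IsSymm := (hA.smul _).sub (transpose_vecMulVec 1 1)
  have hS_le (i j : V) : S i j ^ 2 ≤ 1 := by
    rw [sq_le_one_iff_abs_le_one, abs_le]
    simp only [S, Matrix.sub_apply, Matrix.smul_apply, vecMulVec_apply, Pi.one_apply, smul_eq_mul]
    constructor <;> linarith [hA_nonneg i j, hA_le_one i j]
  have add_eq : vecMulVec 1 1 + S = (2 : K) • A := add_sub_cancel _ _
  have sub_eq : vecMulVec 1 1 - S = (2 : K) • (vecMulVec 1 1 - A) := by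
    simp only [S]
    module
  have scaled := trace_ones_add_mul_ones_sub_pow_three_le hS hS_le
  rw [add_eq, sub_eq, smul_mul_smul_comm, smul_pow, trace_smul, smul_eq_mul] at scaled
  linarith

end

section

open Matrix

variable {V R : Type*} [Fintype V]

lemma sum_fin_succ_fun {M : Type*} [AddCommMonoid M] (n : ℕ) (F : (Fin (n + 1) → V) → M) :
    ∑ f, F f = ∑ a, ∑ f : Fin n → V, F (Fin.cons a f) := by
  rw [← (Fin.consEquiv fun _ ↦ V).sum_comp, Fintype.sum_prod_type]
  rfl

lemma trace_mul_pow_three [DecidableEq V] [CommSemiring R] (A B : Matrix V V R) :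
    trace ((A * B) ^ 3) = ∑ f : Fin 6 → V,
      A (f 0) (f 1) * B (f 1) (f 2) * A (f 2) (f 3) * B (f 3) (f 4) * A (f 4) (f 5)
        * B (f 5) (f 0) := by
  have assoc : (A * B) ^ 3 = A * (B * (A * (B * (A * B)))) := by
    simp only [pow_succ, pow_zero, one_mul, Matrix.mul_assoc]
  simp only [assoc, trace, Matrix.diag_apply, mul_apply, Finset.mul_sum, sum_fin_succ_fun,
    Fintype.sum_unique]
  simp only [← mul_assoc]
  rfl

end

section

variable {V α β : Type*}

open Classical in
/-- The adjacency matrix of the red subgraph. Its complement in the all-ones matrix counts blue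
edges and non-edges alike, the diagonal included. -/
noncomputable def ECGraph.redMatrix (G : ECGraph V) : Matrix V V ℝ :=
  .of fun u v ↦ if G.graph.Adj u v ∧ G.color u v = true then 1 else 0

lemma ECGraph.redMatrix_isSymm (G : ECGraph V) : G.redMatrix.IsSymm := by
  classical
  ext u v
  simp only [Matrix.transpose_apply, redMatrix, Matrix.of_apply]
  exact if_congr (by rw [G.graph.adj_comm, G.color_symm]) rfl rfl

lemma ECGraph.redMatrix_nonneg (G : ECGraph V) (u v : V) : 0 ≤ G.redMatrix u v := by
  rw [redMatrix, Matrix.of_apply]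
  split_ifs <;> norm_num

lemma ECGraph.redMatrix_le_one (G : ECGraph V) (u v : V) : G.redMatrix u v ≤ 1 := by
  rw [redMatrix, Matrix.of_apply]
  split_ifs <;> norm_num

lemma IsHom.redMatrix_apply {H : ECGraph α} {G : ECGraph V} {f : α → V} (hf : IsHom H G f)
    {i j : α} (hij : H.graph.Adj i j) :
    G.redMatrix (f i) (f j) = if H.color i j then 1 else 0 := by
  obtain ⟨adj, color_eq⟩ := hf i j hij
  simp [ECGraph.redMatrix, adj, color_eq]

lemma C6A_adj_add_one (i : Fin 6) : C6A.graph.Adj i (i + 1) := by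
  simp [C6A, cycleGraph_adj]

lemma C6A_color_add_one : ∀ i : Fin 6, C6A.color i (i + 1) = decide (Even i.val) := by
  decide

lemma IsHom.redMatrix_apply_add_one {G : ECGraph V} {f : Fin 6 → V} (hf : IsHom C6A G f)
    (i : Fin 6) : G.redMatrix (f i) (f (i + 1)) = if Even i.val then 1 else 0 := by
  simp only [hf.redMatrix_apply (C6A_adj_add_one i), C6A_color_add_one, decide_eq_true_eq]

open Matrix

lemma card_isHom_C6A_le_trace [Fintype V] [DecidableEq V] (G : ECGraph V) :
    (Nat.card {f : Fin 6 → V // IsHom C6A G f} : ℝ) ≤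
      trace ((G.redMatrix * (vecMulVec 1 1 - G.redMatrix)) ^ 3) := by
  classical
  rw [Nat.card_eq_fintype_card, Fintype.card_subtype, ← Finset.sum_boole, trace_mul_pow_three]
  refine Finset.sum_le_sum fun f _ ↦ ?_
  simp only [Matrix.sub_apply, vecMulVec_apply, Pi.one_apply, mul_one]
  split_ifs with hf
  · have red (i : Fin 6) (hi : Even i.val) : G.redMatrix (f i) (f (i + 1)) = 1 := by
      rw [hf.redMatrix_apply_add_one, if_pos hi]
    have blue (i : Fin 6) (hi : ¬ Even i.val) : G.redMatrix (f i) (f (i + 1)) = 0 := by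
      rw [hf.redMatrix_apply_add_one, if_neg hi]
    rw [show G.redMatrix (f 0) (f 1) = 1 from red 0 (by decide),
      show G.redMatrix (f 1) (f 2) = 0 from blue 1 (by decide),
      show G.redMatrix (f 2) (f 3) = 1 from red 2 (by decide),
      show G.redMatrix (f 3) (f 4) = 0 from blue 3 (by decide),
      show G.redMatrix (f 4) (f 5) = 1 from red 4 (by decide),
      show G.redMatrix (f 5) (f 0) = 0 from blue 5 (by decide)]
    norm_num
  · have red_nonneg := G.redMatrix_nonneg
    have blue_nonneg (u v : V) : 0 ≤ 1 - G.redMatrix u v := sub_nonneg.2 (G.redMatrix_le_one u v)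
    apply_rules [mul_nonneg]

theorem homDensity_C6A_le [Fintype V] (G : ECGraph V) : homDensity C6A G ≤ (1 / 2) ^ 6 := by
  classical
  rw [homDensity, Fintype.card_fin]
  exact div_le_of_le_mul₀ (by positivity) (by positivity) <|
    (card_isHom_C6A_le_trace G).trans <|
      trace_mul_ones_sub_pow_three_le G.redMatrix_isSymm G.redMatrix_nonneg G.redMatrix_le_one

end

section

lemma one_sub_sq_div_le_descFactorial_div_pow {n k : ℕ} (h : k ≤ n) :
    1 - (k : ℝ) ^ 2 / n ≤ n.descFactorial k / (n : ℝ) ^ k := by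
  rcases n.eq_zero_or_pos with rfl | hn
  · simp [Nat.le_zero.1 h]
  have n_pos : (0 : ℝ) < n := Nat.cast_pos.2 hn
  have ratio_le_one : (k : ℝ) / n ≤ 1 := div_le_one_of_le₀ (Nat.cast_le.2 h) n_pos.le
  calc 1 - (k : ℝ) ^ 2 / n = 1 + k * -(k / n) := by ring
    _ ≤ (1 + -(k / n)) ^ k := one_add_mul_le_pow (by linarith) k
    _ = ((n - k : ℕ) : ℝ) ^ k / n ^ k := by
      rw [← div_pow, Nat.cast_sub h, sub_div, div_self n_pos.ne', sub_eq_add_neg]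
    _ ≤ n.descFactorial k / n ^ k := by
      gcongr
      exact_mod_cast (Nat.pow_le_pow_left (by lia) k).trans (n.pow_sub_le_descFactorial k)

variable {α β : Type*}

lemma card_injective_isHom_le_card_isHom [Finite α] [Finite β]
    (H : ECGraph α) (G : ECGraph β) :
    Nat.card {f : α → β // Injective f ∧ IsHom H G f} ≤ Nat.card {f : α → β // IsHom H G f} :=
  Nat.card_mono (Set.toFinite _) fun _ hf ↦ hf.2

variable [Fintype α] [Fintype β]

lemma injDensity_eq_div_descFactorial (H : ECGraph α) (G : ECGraph β)
    (h : Fintype.card α ≤ Fintype.card β) :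
    injDensity H G = Nat.card {f : α → β // Injective f ∧ IsHom H G f} /
      (Fintype.card β).descFactorial (Fintype.card α) := by
  rw [injDensity, ← Nat.factorial_mul_descFactorial h, Nat.cast_mul, mul_comm,
    mul_div_mul_left _ _ (by positivity)]

lemma injDensity_eq_zero_of_card_lt (H : ECGraph α) (G : ECGraph β)
    (h : Fintype.card β < Fintype.card α) : injDensity H G = 0 := by
  have : IsEmpty {f : α → β // Injective f ∧ IsHom H G f} :=
    ⟨fun f ↦ h.not_ge (Fintype.card_le_of_injective f.1 f.2.1)⟩
  rw [injDensity, Nat.card_of_isEmpty, Nat.cast_zero, zero_mul, zero_div]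

lemma card_injective_isHom_le_descFactorial (H : ECGraph α) (G : ECGraph β) :
    Nat.card {f : α → β // Injective f ∧ IsHom H G f} ≤
      (Fintype.card β).descFactorial (Fintype.card α) := by
  classical
  rw [← Fintype.card_embedding_eq, ← Nat.card_eq_fintype_card]
  exact Nat.card_le_card_of_injective (fun f ↦ ⟨f.1, f.2.1⟩) fun f g hfg ↦
    Subtype.ext (congrArg Embedding.toFun hfg)

lemma injDensity_le_one (H : ECGraph α) (G : ECGraph β) : injDensity H G ≤ 1 := by
  obtain h | h := le_or_gt (Fintype.card α) (Fintype.card β)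
  · rw [injDensity_eq_div_descFactorial H G h]
    exact div_le_one_of_le₀ (Nat.cast_le.2 (card_injective_isHom_le_descFactorial H G))
      (Nat.cast_nonneg _)
  · rw [injDensity_eq_zero_of_card_lt H G h]
    exact zero_le_one

theorem injDensity_le_homDensity_add (H : ECGraph α) (G : ECGraph β) :
    injDensity H G ≤ homDensity H G + (Fintype.card α : ℝ) ^ 2 / Fintype.card β := by
  obtain h | h := lt_or_ge (Fintype.card β) (Fintype.card α)
  · rw [injDensity_eq_zero_of_card_lt H G h, homDensity]
    positivity
  have error_nonneg : 0 ≤ (Fintype.card α : ℝ) ^ 2 / Fintype.card β := by positivity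
  have injDensity_nonneg : 0 ≤ injDensity H G := by rw [injDensity]; positivity
  have desc_ne_zero : ((Fintype.card β).descFactorial (Fintype.card α) : ℝ) ≠ 0 :=
    Nat.cast_ne_zero.2 (Nat.descFactorial_eq_zero_iff_lt.not.2 h.not_gt)
  have mul_le_homDensity : injDensity H G * (1 - (Fintype.card α : ℝ) ^ 2 / Fintype.card β) ≤
      homDensity H G := by
    calc injDensity H G * (1 - (Fintype.card α : ℝ) ^ 2 / Fintype.card β)
      _ ≤ injDensity H G * ((Fintype.card β).descFactorial (Fintype.card α) /
          (Fintype.card β : ℝ) ^ Fintype.card α) := by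
        gcongr
        exact one_sub_sq_div_le_descFactorial_div_pow h
      _ = Nat.card {f : α → β // Injective f ∧ IsHom H G f} /
          (Fintype.card β : ℝ) ^ Fintype.card α := by
        rw [injDensity_eq_div_descFactorial H G h, div_mul_div_cancel₀ desc_ne_zero]
      _ ≤ homDensity H G := by
        rw [homDensity]
        gcongr
        exact card_injective_isHom_le_card_isHom H G
  linarith [mul_le_mul_of_nonneg_right (injDensity_le_one H G) error_nonneg]

end

/-- Every edge-coloured graph `G` on `n` vertices satisfies
`t_inj(C_6^A, G) ≤ (1/2)^6 + O(1/n)` with an absolute implicit constant. -/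
theorem injDensity_C6A_le :
    ∃ C : ℝ, ∀ (V : Type) [Fintype V] (G : ECGraph V),
      injDensity C6A G ≤ (1 / 2 : ℝ) ^ 6 + C / (Fintype.card V : ℝ) := by
  refine ⟨(Fintype.card (Fin 6) : ℝ) ^ 2, fun V _ G ↦ ?_⟩
  calc injDensity C6A G
    _ ≤ homDensity C6A G + (Fintype.card (Fin 6) : ℝ) ^ 2 / Fintype.card V :=
      injDensity_le_homDensity_add C6A G
    _ ≤ (1 / 2 : ℝ) ^ 6 + (Fintype.card (Fin 6) : ℝ) ^ 2 / Fintype.card V := by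
      gcongr
      exact homDensity_C6A_le G
end
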